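/- Let X be a random vector on ℝ^d with law ν having finite first moment, Q = (Q₁,…,Q_d) a transport of the uniform measure on [0,1]^d onto ν, and α = (i₁,…,i_d) a multi-index of degree 2, i.e. i_j = 2 for exactly one index j and i_k = 1 for all k ≠ j. Let U = (U₁,…,U_d) be uniform on [0,1]^d and define the real random variable V = E[Q_i(U) | U_j] (the conditional expectation of the i-th component of Q over the coordinates other than U_j). Then |⟨λ_α, b_i⟩| ≤ λ₂(V), where λ_α = ∫_{[0,1]^d} Q(t) L_α(t) dt and λ₂(V) is the second univariate L-moment of V. -/

import Mathlib

open MeasureTheory Finset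

/-- The `r`-th shifted Legendre polynomial on `[0,1]` (`r ≥ 1`). -/
noncomputable def shiftedLegendre (r : ℕ) (t : ℝ) : ℝ :=
  ∑ k ∈ Finset.range r, (-1 : ℝ) ^ k * ((r - 1).choose k : ℝ) ^ 2 * t ^ (r - 1 - k) * (1 - t) ^ k

/-- The multivariate Legendre polynomial `L_α(t) = ∏_k L_{α_k}(t_k)`. -/
noncomputable def multiLegendre {d : ℕ} (α : Fin d → ℕ) (t : Fin d → ℝ) : ℝ :=
  ∏ k, shiftedLegendre (α k) (t k)

/-- The uniform probability measure on the cube `[0,1]^d`. -/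
noncomputable def unifCube (d : ℕ) : Measure (Fin d → ℝ) :=
  volume.restrict (Set.univ.pi fun _ => Set.Icc (0 : ℝ) 1)

noncomputable def unitMeas : Measure ℝ := volume.restrict (Set.Icc (0 : ℝ) 1)

instance unitMeas_prob : IsProbabilityMeasure unitMeas := ⟨by simp [unitMeas]⟩

theorem unifCube_eq (d : ℕ) : unifCube d = Measure.pi (fun _ => unitMeas) := by
  unfold unifCube unitMeas
  rw [volume_pi, Measure.restrict_pi_pi]

theorem mp_update {d : ℕ} (j : Fin d) :
    MeasurePreserving (fun p : ℝ × (Fin d → ℝ) => Function.update p.2 j p.1)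
      (unitMeas.prod (Measure.pi (fun _ : Fin d => unitMeas)))
      (Measure.pi (fun _ : Fin d => unitMeas)) := by
  have hm : Measurable (fun p : ℝ × (Fin d → ℝ) => Function.update p.2 j p.1) := by
    rw [measurable_pi_iff]
    intro k
    by_cases h : k = j
    · subst h
      simpa using measurable_fst
    · simp only [Function.update_of_ne h]
      fun_prop
  refine ⟨hm, ?_⟩
  symm
  apply Measure.pi_eq
  intro S hS
  rw [Measure.map_apply hm (MeasurableSet.univ_pi hS)]
  have : (fun p : ℝ × (Fin d → ℝ) => Function.update p.2 j p.1) ⁻¹' (Set.univ.pi S)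
      = (S j) ×ˢ (Set.univ.pi (Function.update S j Set.univ)) := by
    ext p
    simp only [Set.mem_preimage, Set.mem_pi, Set.mem_univ, true_implies, Set.mem_prod]
    constructor
    · intro h
      refine ⟨by simpa using h j, fun k => ?_⟩
      by_cases hk : k = j
      · subst hk; simp
      · simpa [Function.update_of_ne hk] using h k
    · rintro ⟨h1, h2⟩ k
      by_cases hk : k = j
      · subst hk; simpa using h1
      · simpa [Function.update_of_ne hk] using h2 k
  rw [this, Measure.prod_prod, Measure.pi_pi, ← Finset.mul_prod_erase _ _ (Finset.mem_univ j),
    ← Finset.mul_prod_erase _ (fun k => unitMeas (S k)) (Finset.mem_univ j)]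
  simp only [Function.update_self, measure_univ, one_mul]
  congr 1
  apply Finset.prod_congr rfl
  intro k hk
  rw [Function.update_of_ne (Finset.ne_of_mem_erase hk)]

noncomputable def sgnK (s t : ℝ) : ℝ :=
  (Set.Iio s).indicator (fun _ => (1 : ℝ)) t - (Set.Ioi s).indicator (fun _ => (1 : ℝ)) t

theorem sgnK_eq (s t : ℝ) : sgnK s t = if t < s then 1 else if s < t then -1 else 0 := by
  unfold sgnK Set.indicator
  simp only [Set.mem_Iio, Set.mem_Ioi]
  split_ifs <;> first | (exfalso; linarith) | norm_num

theorem sgnK_anti (s t : ℝ) : sgnK s t = - sgnK t s := by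
  simp only [sgnK_eq]
  split_ifs <;> first | (exfalso; linarith) | norm_num

theorem sgnK_abs (s t : ℝ) : |sgnK s t| ≤ 1 := by
  simp only [sgnK_eq]
  split_ifs <;> norm_num

theorem sgnK_meas : Measurable (fun p : ℝ × ℝ => sgnK p.1 p.2) := by
  simp only [sgnK_eq]
  refine Measurable.ite (measurableSet_lt measurable_snd measurable_fst) measurable_const ?_
  exact Measurable.ite (measurableSet_lt measurable_fst measurable_snd) measurable_const
    measurable_const

theorem sgnK_int {s : ℝ} (hs : s ∈ Set.Icc (0 : ℝ) 1) : ∫ t, sgnK s t ∂unitMeas = 2 * s - 1 := by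
  unfold sgnK
  rw [integral_sub ((integrable_const _).indicator measurableSet_Iio)
    ((integrable_const _).indicator measurableSet_Ioi),
    integral_indicator_const _ measurableSet_Iio, integral_indicator_const _ measurableSet_Ioi]
  have h1 : Set.Iio s ∩ Set.Icc 0 1 = Set.Ico 0 s := by
    ext x; simp only [Set.mem_inter_iff, Set.mem_Iio, Set.mem_Icc, Set.mem_Ico]
    constructor
    · rintro ⟨a, b, c⟩; exact ⟨b, a⟩
    · rintro ⟨a, b⟩; exact ⟨b, a, by linarith [hs.2]⟩
  have h2 : Set.Ioi s ∩ Set.Icc 0 1 = Set.Ioc s 1 := by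
    ext x; simp only [Set.mem_inter_iff, Set.mem_Ioi, Set.mem_Icc, Set.mem_Ioc]
    constructor
    · rintro ⟨a, b, c⟩; exact ⟨a, c⟩
    · rintro ⟨a, b⟩; exact ⟨a, by linarith [hs.1], b⟩
  simp only [unitMeas, measureReal_restrict_apply measurableSet_Iio,
    measureReal_restrict_apply measurableSet_Ioi, h1, h2, Real.volume_real_Ico_of_le hs.1,
    Real.volume_real_Ioc_of_le hs.2, smul_eq_mul]
  ring

theorem one_dim_bound (g : ℝ → ℝ) (hg : Integrable g unitMeas) :
    |∫ s, g s * (2 * s - 1) ∂unitMeas|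
      ≤ (1 / 2) * ∫ s, ∫ t, |g s - g t| ∂unitMeas ∂unitMeas := by
  have hg1 : Integrable (fun p : ℝ × ℝ => g p.1) (unitMeas.prod unitMeas) := hg.comp_fst _
  have hg2 : Integrable (fun p : ℝ × ℝ => g p.2) (unitMeas.prod unitMeas) := hg.comp_snd _
  have hK : ∀ᵐ p ∂(unitMeas.prod unitMeas), ‖sgnK p.1 p.2‖ ≤ 1 :=
    Filter.Eventually.of_forall fun p => sgnK_abs _ _
  have hgK1 : Integrable (fun p : ℝ × ℝ => g p.1 * sgnK p.1 p.2) (unitMeas.prod unitMeas) :=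
    hg1.mul_bdd sgnK_meas.aestronglyMeasurable hK
  have hgK2 : Integrable (fun p : ℝ × ℝ => g p.2 * sgnK p.1 p.2) (unitMeas.prod unitMeas) :=
    hg2.mul_bdd sgnK_meas.aestronglyMeasurable hK
  have e1 : ∫ s, g s * (2 * s - 1) ∂unitMeas
      = ∫ p, g p.1 * sgnK p.1 p.2 ∂(unitMeas.prod unitMeas) := by
    rw [integral_prod _ hgK1]
    refine setIntegral_congr_fun measurableSet_Icc fun s hs => ?_
    simp only [integral_const_mul, sgnK_int hs]
  have e2 : ∫ p, g p.1 * sgnK p.1 p.2 ∂(unitMeas.prod unitMeas)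
      = - ∫ p, g p.2 * sgnK p.1 p.2 ∂(unitMeas.prod unitMeas) := by
    rw [← integral_prod_swap, ← integral_neg]
    congr 1
    ext p
    simp only [Prod.fst_swap, Prod.snd_swap]
    rw [sgnK_anti]; ring
  have e3 : ∫ s, g s * (2 * s - 1) ∂unitMeas
      = (1 / 2) * ∫ p, (g p.1 - g p.2) * sgnK p.1 p.2 ∂(unitMeas.prod unitMeas) := by
    simp only [sub_mul]
    rw [integral_sub hgK1 hgK2, e1]
    linarith
  have hd : Integrable (fun p : ℝ × ℝ => |g p.1 - g p.2|) (unitMeas.prod unitMeas) :=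
    (hg1.sub hg2).abs
  rw [e3, abs_mul, abs_of_pos (by norm_num : (0 : ℝ) < 1 / 2), ← integral_prod _ hd]
  refine mul_le_mul_of_nonneg_left ?_ (by norm_num)
  rw [← Real.norm_eq_abs]
  refine norm_integral_le_of_norm_le hd (Filter.Eventually.of_forall fun p => ?_)
  rw [norm_mul]
  exact mul_le_of_le_one_right (abs_nonneg _) (sgnK_abs _ _)

theorem multiLegendre_two {d : ℕ} (α : Fin d → ℕ) (j : Fin d)
    (hαj : α j = 2) (hαk : ∀ k, k ≠ j → α k = 1) (t : Fin d → ℝ) :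
    multiLegendre α t = 2 * t j - 1 := by
  unfold multiLegendre
  rw [Finset.prod_eq_single j]
  · rw [hαj]
    simp [shiftedLegendre, Finset.sum_range_succ]
    ring
  · intro k _ hk
    rw [hαk k hk]
    simp [shiftedLegendre]
  · simp

/-- For a transport `Q` of the uniform measure on `[0,1]^d` onto the law `ν` of
a random vector `X` with finite first moment, and a multi-index `α` of degree 2
(`α_j = 2` for exactly one `j`, `α_k = 1` otherwise), the `i`-th coordinate of
the L-moment `λ_α` satisfies `|⟨λ_α, b_i⟩| ≤ λ₂(V)` where
`V = E[Q_i(U) | U_j]` (as a function `g` of the `j`-th coordinate of the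
uniform vector `U`) and `λ₂(V) = ½ E[|V − V'|]` is its second univariate
L-moment. -/
theorem abs_lmoment_degree_two_le {d : ℕ}
    (ν : Measure (Fin d → ℝ)) [IsProbabilityMeasure ν]
    (hmom : Integrable (fun x => ‖x‖) ν)
    (Q : (Fin d → ℝ) → (Fin d → ℝ)) (hQmeas : Measurable Q)
    (hQmap : Measure.map Q (unifCube d) = ν)
    (α : Fin d → ℕ) (i j : Fin d)
    (hαj : α j = 2) (hαk : ∀ k, k ≠ j → α k = 1)
    (g : ℝ → ℝ)
    (hg : ∀ s : ℝ, g s = ∫ t, Q (Function.update t j s) i ∂(unifCube d)) :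
    |∫ t, Q t i * multiLegendre α t ∂(unifCube d)|
      ≤ (1 / 2) * ∫ s in Set.Icc (0 : ℝ) 1, ∫ s' in Set.Icc (0 : ℝ) 1, |g s - g s'| := by
  have hQi : Integrable (fun t => Q t i) (unifCube d) := by
    have h1 : Integrable (fun x => ‖x‖) (Measure.map Q (unifCube d)) := by rw [hQmap]; exact hmom
    have h2 : Integrable (fun t => ‖Q t‖) (unifCube d) := h1.comp_measurable hQmeas
    refine h2.mono' ((measurable_pi_apply i).comp hQmeas).aestronglyMeasurable
      (Filter.Eventually.of_forall fun t => norm_le_pi_norm _ i)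
  rw [unifCube_eq] at hQi
  simp only [multiLegendre_two α j hαj hαk]
  rw [unifCube_eq] at *
  have hmp := mp_update (d := d) j
  have hF : Integrable (fun p : ℝ × (Fin d → ℝ) => Q (Function.update p.2 j p.1) i)
      (unitMeas.prod (Measure.pi (fun _ : Fin d => unitMeas))) := hmp.integrable_comp_of_integrable hQi
  have hgI : Integrable g unitMeas := by
    have := hF.integral_prod_left
    refine this.congr (Filter.Eventually.of_forall fun s => (hg s).symm)
  have hae : ∀ᵐ t ∂(Measure.pi (fun _ : Fin d => unitMeas)), ‖2 * t j - 1‖ ≤ 1 := by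
    have h0 : ∀ᵐ s ∂unitMeas, ‖2 * s - 1‖ ≤ 1 := by
      refine (ae_restrict_iff' measurableSet_Icc).2 (Filter.Eventually.of_forall fun s hs => ?_)
      rw [Real.norm_eq_abs, abs_le]
      constructor <;> linarith [hs.1, hs.2]
    exact (measurePreserving_eval (fun _ : Fin d => unitMeas) j).quasiMeasurePreserving.ae h0
  have hH : Integrable (fun t => Q t i * (2 * t j - 1)) (Measure.pi (fun _ : Fin d => unitMeas)) :=
    hQi.mul_bdd (Measurable.aestronglyMeasurable (by fun_prop)) hae
  have hH2 : Integrable (fun p : ℝ × (Fin d → ℝ) => Q (Function.update p.2 j p.1) i *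
      (2 * Function.update p.2 j p.1 j - 1))
      (unitMeas.prod (Measure.pi (fun _ : Fin d => unitMeas))) :=
    hmp.integrable_comp_of_integrable hH
  have key : ∫ t, Q t i * (2 * t j - 1) ∂(Measure.pi (fun _ : Fin d => unitMeas))
      = ∫ s, g s * (2 * s - 1) ∂unitMeas := by
    conv_lhs => rw [← hmp.map_eq]
    rw [integral_map hmp.measurable.aemeasurable (by rw [hmp.map_eq]; exact hH.aestronglyMeasurable)]
    rw [integral_prod _ hH2]
    congr 1
    ext s
    simp only [Function.update_self, integral_mul_const, hg s]
  rw [key]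
  exact one_dim_bound g hgI
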